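/- Define g₅ : [0,1] → ℝ by g₅(t) = 4t − 4t³. Then there exists a unique real number η₀ such that ∫₀¹ (4t−2)·e^{−(4t−2)η₀}·g₅(t) dt = 0; moreover 0.169 < η₀ < 0.170. -/

import Mathlib

open MeasureTheory intervalIntegral

/-- The volume function `g₅(t) = vol(π*O(1) − t E_W) = 4t − 4t³` on the blow-up of the
quintic Del Pezzo fivefold `M₅` along `W ≅ ℙ³`. -/
noncomputable def gFive (t : ℝ) : ℝ := 4 * t - 4 * t ^ 3

noncomputable def mom (k : ℕ) : ℝ :=
  (((3/2) * 2^(k+1)/(k+1) + (1/4) * 2^(k+2)/(k+2) - (3/8) * 2^(k+3)/(k+3) - (1/16) * 2^(k+4)/(k+4))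
  - ((3/2) * (-2)^(k+1)/(k+1) + (1/4) * (-2)^(k+2)/(k+2) - (3/8) * (-2)^(k+3)/(k+3)
    - (1/16) * (-2)^(k+4)/(k+4)))/4

lemma pow_hd (n : ℕ) (t : ℝ) :
    HasDerivAt (fun t : ℝ => (4*t-2)^(n+1)/((n:ℝ)+1)) (4 * (4*t-2)^n) t := by
  have h1 : HasDerivAt (fun t : ℝ => 4*t-2) 4 t := by
    simpa using ((hasDerivAt_id t).const_mul 4).sub_const 2
  have h2 := (h1.pow (n+1)).div_const ((n:ℝ)+1)
  have : (n:ℝ)+1 ≠ 0 := by positivity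
  refine h2.congr_deriv ?_
  push_cast
  field_simp

lemma mom_eq (k : ℕ) : ∫ t in (0:ℝ)..1, (4*t-2)^k * gFive t = mom k := by
  have hd : ∀ t ∈ Set.uIcc (0:ℝ) 1, HasDerivAt (fun t : ℝ =>
      ((3/2) * ((4*t-2)^(k+1)/((k:ℝ)+1)) + (1/4) * ((4*t-2)^(k+1+1)/(((k+1:ℕ):ℝ)+1))
        - (3/8) * ((4*t-2)^(k+2+1)/(((k+2:ℕ):ℝ)+1))
        - (1/16) * ((4*t-2)^(k+3+1)/(((k+3:ℕ):ℝ)+1)))/4) ((4*t-2)^k * gFive t) t := by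
    intro t _
    have := ((((pow_hd k t).const_mul (3/2)).add ((pow_hd (k+1) t).const_mul (1/4))).sub
      ((pow_hd (k+2) t).const_mul (3/8))).sub ((pow_hd (k+3) t).const_mul (1/16))
    refine (this.div_const 4).congr_deriv ?_
    unfold gFive
    ring
  rw [integral_eq_sub_of_hasDerivAt hd]
  · unfold mom
    push_cast
    norm_num
    ring
  · apply Continuous.intervalIntegrable
    unfold gFive
    fun_prop

noncomputable def FF (η : ℝ) : ℝ :=
  ∫ t in (0:ℝ)..1, (4 * t - 2) * Real.exp (-(4 * t - 2) * η) * gFive t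

lemma FF_cont : Continuous FF := by
  unfold FF
  apply intervalIntegral.continuous_parametric_intervalIntegral_of_continuous'
  unfold gFive
  fun_prop

lemma FF_anti : StrictAnti FF := by
  intro a b hab
  have key : ∀ s : ℝ, s * Real.exp (-s * b) ≤ s * Real.exp (-s * a) := by
    intro s
    rcases le_total 0 s with h | h
    · exact mul_le_mul_of_nonneg_left (Real.exp_le_exp.2 (by nlinarith)) h
    · exact mul_le_mul_of_nonpos_left (Real.exp_le_exp.2 (by nlinarith)) h
  unfold FF
  apply integral_lt_integral_of_continuousOn_of_le_of_exists_lt (by norm_num)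
  · unfold gFive; fun_prop
  · unfold gFive; fun_prop
  · intro t ht
    apply mul_le_mul_of_nonneg_right (key _)
    unfold gFive
    have h0 := ht.1.le
    have h1 := ht.2
    have : 4 * t - 4 * t^3 = 4 * t * (1-t) * (1+t) := by ring
    rw [this]
    have : 0 ≤ 1 - t := by linarith
    positivity
  · refine ⟨3/4, by norm_num, ?_⟩
    apply mul_lt_mul_of_pos_right
    · apply mul_lt_mul_of_pos_left
      · apply Real.exp_lt_exp.2
        linarith
      · norm_num
    · norm_num [gFive]

lemma FF_approx (η : ℝ) (h0 : 0 ≤ η) (h1 : η ≤ 0.17) :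
    |FF η - ∑ j ∈ Finset.range 6, (-η)^j / (j.factorial : ℝ) * mom (j+1)| ≤ 1/10000 := by
  have e : ∑ j ∈ Finset.range 6, (-η)^j / (j.factorial : ℝ) * mom (j+1) =
      ∫ t in (0:ℝ)..1, ∑ j ∈ Finset.range 6,
        (-η)^j / (j.factorial : ℝ) * ((4*t-2)^(j+1) * gFive t) := by
    rw [intervalIntegral.integral_finsetSum]
    · simp only [intervalIntegral.integral_const_mul, mom_eq]
    · intro j _
      apply Continuous.intervalIntegrable
      unfold gFive
      fun_prop
  rw [e, FF, ← intervalIntegral.integral_sub]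
  · rw [← Real.norm_eq_abs]
    refine (intervalIntegral.norm_integral_le_of_norm_le_const (C := 1/10000) ?_).trans (by norm_num)
    intro t ht
    rw [Set.uIoc_of_le (by norm_num)] at ht
    obtain ⟨ht0, ht1⟩ := ht
    have hs : |4*t-2| ≤ 2 := abs_le.2 ⟨by linarith, by linarith⟩
    have hx : |-(4*t-2)*η| ≤ 0.34 := by
      rw [abs_mul, abs_neg, abs_of_nonneg h0]
      nlinarith [abs_nonneg (4*t-2)]
    have hb := Real.exp_bound (x := -(4*t-2)*η) (hx.trans (by norm_num)) (n := 6) (by norm_num)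
    have hp : |-(4*t-2)*η|^6 ≤ 0.34^6 := pow_le_pow_left₀ (abs_nonneg _) hx 6
    have hg : |gFive t| ≤ 4 := by
      unfold gFive
      have : t^3 ≤ 1 := pow_le_one₀ ht0.le ht1
      have : 0 ≤ t^3 := by positivity
      exact abs_le.2 ⟨by linarith, by linarith⟩
    have hE : |Real.exp (-(4*t-2)*η) - ∑ m ∈ Finset.range 6, (-(4*t-2)*η)^m / (m.factorial:ℝ)|
        ≤ 1/100000 := by
      refine hb.trans ?_
      have : ((Nat.succ 6 : ℕ) : ℝ) / ((Nat.factorial 6 : ℕ) * (6:ℕ)) = 7/4320 := by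
        norm_num [Nat.factorial]
      rw [this]
      calc _ ≤ (0.34:ℝ)^6 * (7/4320) := by gcongr
        _ ≤ _ := by norm_num
    have : (4 * t - 2) * Real.exp (-(4 * t - 2) * η) * gFive t - ∑ j ∈ Finset.range 6,
        (-η)^j / (j.factorial : ℝ) * ((4*t-2)^(j+1) * gFive t) =
        (4*t-2) * (Real.exp (-(4*t-2)*η) - ∑ m ∈ Finset.range 6, (-(4*t-2)*η)^m / (m.factorial:ℝ))
          * gFive t := by
      rw [mul_sub (4*t-2) (Real.exp _), sub_mul _ _ (gFive t), Finset.mul_sum, Finset.sum_mul]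
      congr 1
      apply Finset.sum_congr rfl
      intro j _
      rw [show -(4*t-2)*η = (4*t-2) * (-η) by ring, mul_pow]
      ring
    rw [this, Real.norm_eq_abs, abs_mul, abs_mul]
    calc _ ≤ 2 * (1/100000:ℝ) * 4 := by gcongr
      _ ≤ _ := by norm_num
  · apply Continuous.intervalIntegrable
    unfold gFive
    fun_prop
  · apply Continuous.intervalIntegrable
    unfold gFive
    fun_prop

lemma FF_lo : 0 < FF 0.169 := by
  have h := abs_le.1 (FF_approx 0.169 (by norm_num) (by norm_num))
  norm_num [Finset.sum_range_succ, mom, Nat.factorial] at h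
  linarith [h.1]

lemma FF_hi : FF 0.170 < 0 := by
  have h := abs_le.1 (FF_approx 0.170 (by norm_num) (by norm_num))
  norm_num [Finset.sum_range_succ, mom, Nat.factorial] at h ⊢
  linarith [h.2]

/-- There is a unique real number `η₀` with
`∫₀¹ (4t−2)·e^{−(4t−2)η₀}·g₅(t) dt = 0`, and it satisfies `0.169 < η₀ < 0.170`.
This `η₀` is the soliton candidate on `M₅`. -/
theorem soliton_candidate_M5 :
    ∃ η₀ : ℝ,
      (∫ t in (0:ℝ)..1, (4 * t - 2) * Real.exp (-(4 * t - 2) * η₀) * gFive t) = 0 ∧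
      0.169 < η₀ ∧ η₀ < 0.170 ∧
      ∀ η : ℝ,
        (∫ t in (0:ℝ)..1, (4 * t - 2) * Real.exp (-(4 * t - 2) * η) * gFive t) = 0 →
          η = η₀ := by
  obtain ⟨x, hx, h0⟩ := intermediate_value_Icc' (show (0.169:ℝ) ≤ 0.170 by norm_num)
    FF_cont.continuousOn ⟨FF_hi.le, FF_lo.le⟩
  refine ⟨x, h0, ?_, ?_, fun η hη => FF_anti.injective (Eq.trans hη h0.symm)⟩
  · exact FF_anti.lt_iff_gt.1 (h0 ▸ FF_lo)
  · exact FF_anti.lt_iff_gt.1 (h0 ▸ FF_hi)
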